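/- Recursive last-token decomposition: let s be a nonempty string, let θ(s) be the last token of 𝕋_D(s), and let s_pre denote s with the suffix θ(s) removed. Then 𝕋_D(s) = 𝕋_D(s_pre) ++ [θ(s)]. -/

import Mathlib

/-!
Common BPE formalization preamble.

A token is a (nonempty) string over the alphabet `α`, modeled as `List α`.
A merge rule is a pair of tokens; a dictionary is an ordered list of rules
(earlier rules have strictly higher priority).
-/

namespace BPE

variable {α : Type*} [DecidableEq α]

/-- A token is a string over the alphabet (nonemptiness is imposed by hypotheses). -/
abbrev Token (α : Type*) := List α

/-- A merge rule is an ordered pair of tokens. -/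
abbrev Rule (α : Type*) := Token α × Token α

/-- A dictionary is an ordered list of merge rules; earlier = higher priority. -/
abbrev Dict (α : Type*) := List (Rule α)

/-- Apply a single merge rule to a token list, scanning left to right and replacing
each adjacent occurrence of `r.1` followed by `r.2` by the concatenated token,
resuming the scan after the newly formed token (no overlaps). -/
def applyRule (r : Rule α) : List (Token α) → List (Token α)
  | [] => []
  | [t] => [t]
  | t :: u :: rest =>
      if t = r.1 ∧ u = r.2 then (r.1 ++ r.2) :: applyRule r rest
      else t :: applyRule r (u :: rest)

/-- `φ₀(s)`: the list of single-character tokens of `s`. -/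
def phi0 (s : List α) : List (Token α) := s.map (fun c => [c])

/-- `φ_k(s)`: the token list after applying the first `k` rules of `D` to `s`. -/
def phiK (D : Dict α) (k : ℕ) (s : List α) : List (Token α) :=
  (D.take k).foldl (fun φ r => applyRule r φ) (phi0 s)

/-- The BPE tokenization `𝕋_D(s)`. -/
def tokenize (D : Dict α) (s : List α) : List (Token α) :=
  phiK D D.length s

/-- Detokenization `π`: concatenation of the tokens. -/
def detok (φ : List (Token α)) : List α := φ.flatten

/-- A dictionary is valid if all rule components are genuine (nonempty) tokens. -/
def ValidDict (D : Dict α) : Prop := ∀ r ∈ D, r.1 ≠ [] ∧ r.2 ≠ []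

/-- A token `t` is canonical if `𝕋_D(t) = [t]`. -/
def IsCanonical (D : Dict α) (t : Token α) : Prop := tokenize D t = [t]

/-- The last token `θ(s)`: last element of `𝕋_D(s)` (defaulting to `[]`). -/
def theta (D : Dict α) (s : List α) : Token α := (tokenize D s).getLastD []

/-- `j` (0-based) is the index of the canonical rule of `t`:
`φ_j(t)` has exactly two tokens and `φ_{j+1}(t) = [t]`. -/
def IsCanonicalRuleIdx (D : Dict α) (t : Token α) (j : ℕ) : Prop :=
  j < D.length ∧ (phiK D j t).length = 2 ∧ phiK D (j + 1) t = [t]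

open Classical in
/-- The (0-based) index of the canonical rule of `t` (junk value `0` if none exists). -/
noncomputable def canonIdx (D : Dict α) (t : Token α) : ℕ :=
  if h : ∃ j, IsCanonicalRuleIdx D t j then h.choose else 0

/-- Predecessor `pre(t)`: first token of the two-token stage `φ_{j-1}(t)`. -/
noncomputable def pre (D : Dict α) (t : Token α) : Token α :=
  (phiK D (canonIdx D t) t).headD []

/-- Successor `suc(t)`: second token of the two-token stage `φ_{j-1}(t)`. -/
noncomputable def suc (D : Dict α) (t : Token α) : Token α :=
  (phiK D (canonIdx D t) t).getLastD []

/-- `InPath D x a` means `a ∈ P(x)`: `a` is obtained from `x` by iterating `suc`,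
i.e. `a` lies on the ancestor path of `x` in the Successor Forest. -/
def InPath (D : Dict α) (x a : Token α) : Prop :=
  ∃ n : ℕ, (suc D)^[n] x = a

/-- `s` with the suffix `u` removed. -/
def dropSuffix (s u : List α) : List α := s.take (s.length - u.length)

/-- The Prefix Last-Token Condition of the canonical suffix token `t`
with respect to the string `s`. Atomic tokens satisfy it by definition;
a non-atomic token must satisfy Reachability and Priority dominance. -/
def PLTC (D : Dict α) (s t : Token α) : Prop :=
  t.length = 1 ∨
    (1 < t.length ∧
      InPath D (theta D (dropSuffix s (suc D t))) (pre D t) ∧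
      (theta D (dropSuffix s (suc D t)) ≠ pre D t →
        ∀ u : Token α, 1 < u.length → IsCanonical D u → suc D u = pre D t →
          InPath D (theta D (dropSuffix s (suc D t))) u →
          canonIdx D t < canonIdx D u))


theorem applyRule_split (r : Rule α) (φ : List (Token α)) :
    ∀ A B, applyRule r φ = A ++ B →
      ∃ φ₁ φ₂, φ = φ₁ ++ φ₂ ∧ applyRule r φ₁ = A ∧ applyRule r φ₂ = B := by
  induction φ using applyRule.induct r with
  | case1 =>
    intro A B h
    simp only [applyRule] at h
    obtain ⟨rfl, rfl⟩ := List.append_eq_nil_iff.1 h.symm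
    exact ⟨[], [], rfl, rfl, rfl⟩
  | case2 t =>
    intro A B h
    cases A with
    | nil => exact ⟨[], [t], rfl, rfl, by simpa using h⟩
    | cons a A =>
      simp only [applyRule, List.cons_append, List.cons.injEq] at h
      obtain ⟨rfl, h⟩ := h
      obtain ⟨rfl, rfl⟩ := List.append_eq_nil_iff.1 h.symm
      exact ⟨[t], [], rfl, rfl, rfl⟩
  | case3 t u rest hc ih =>
    intro A B h
    cases A with
    | nil => exact ⟨[], t :: u :: rest, rfl, rfl, by simpa using h⟩
    | cons a A =>
      rw [applyRule, if_pos hc, List.cons_append, List.cons.injEq] at h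
      obtain ⟨rfl, h⟩ := h
      obtain ⟨p, q, rfl, rfl, rfl⟩ := ih _ _ h
      exact ⟨t :: u :: p, q, rfl, by rw [applyRule, if_pos hc], rfl⟩
  | case4 t u rest hc ih =>
    intro A B h
    cases A with
    | nil => exact ⟨[], t :: u :: rest, rfl, rfl, by simpa using h⟩
    | cons a A =>
      rw [applyRule, if_neg hc, List.cons_append, List.cons.injEq] at h
      obtain ⟨rfl, h⟩ := h
      obtain ⟨p, q, hpq, rfl, rfl⟩ := ih _ _ h
      refine ⟨t :: p, q, by rw [hpq]; rfl, ?_, rfl⟩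
      cases p with
      | nil => rfl
      | cons v p =>
        simp only [List.cons_append, List.cons.injEq] at hpq
        obtain ⟨rfl, -⟩ := hpq
        rw [applyRule, if_neg hc]

theorem foldl_split (D : Dict α) : ∀ (φ A B : List (Token α)),
    D.foldl (fun φ r => applyRule r φ) φ = A ++ B →
      ∃ φ₁ φ₂, φ = φ₁ ++ φ₂ ∧ D.foldl (fun φ r => applyRule r φ) φ₁ = A ∧
        D.foldl (fun φ r => applyRule r φ) φ₂ = B := by
  induction D with
  | nil => intro φ A B h; exact ⟨A, B, h, rfl, rfl⟩
  | cons r D ih =>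
    intro φ A B h
    obtain ⟨p, q, h', rfl, rfl⟩ := ih _ _ _ h
    obtain ⟨p', q', rfl, rfl, rfl⟩ := applyRule_split r φ p q h'
    exact ⟨p', q', rfl, rfl, rfl⟩

theorem applyRule_flatten (r : Rule α) (φ : List (Token α)) :
    (applyRule r φ).flatten = φ.flatten := by
  induction φ using applyRule.induct r with
  | case1 => rfl
  | case2 t => rfl
  | case3 t u rest hc ih =>
    rw [applyRule, if_pos hc]
    simp [ih, hc.1, hc.2]
  | case4 t u rest hc ih =>
    rw [applyRule, if_neg hc]
    simp [ih]

theorem foldl_flatten (D : Dict α) : ∀ φ : List (Token α),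
    (D.foldl (fun φ r => applyRule r φ) φ).flatten = φ.flatten := by
  induction D with
  | nil => intro φ; rfl
  | cons r D ih => intro φ; rw [List.foldl_cons, ih, applyRule_flatten]

theorem tokenize_eq (D : Dict α) (s : List α) :
    tokenize D s = D.foldl (fun φ r => applyRule r φ) (phi0 s) := by
  simp [tokenize, phiK]

theorem tokenize_flatten (D : Dict α) (s : List α) : (tokenize D s).flatten = s := by
  rw [tokenize_eq, foldl_flatten]
  induction s with
  | nil => rfl
  | cons a s ih => simpa [phi0] using ih

/-- **Recursive last-token decomposition.** For nonempty `s`,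
`𝕋_D(s) = 𝕋_D(s_pre) ++ [θ(s)]`, where `s_pre` is `s` with the suffix `θ(s)` removed. -/
theorem last_token_decomposition [Fintype α] (D : Dict α) (hD : ValidDict D)
    (s : List α) (hs : s ≠ []) :
    tokenize D s = tokenize D (dropSuffix s (theta D s)) ++ [theta D s] := by
  have hne : tokenize D s ≠ [] := by
    intro h
    have := tokenize_flatten D s
    rw [h] at this
    exact hs this.symm
  have hlast : tokenize D s = (tokenize D s).dropLast ++ [theta D s] := by
    rw [theta, List.getLastD_eq_getLast?, List.getLast?_eq_some_getLast hne, Option.getD_some,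
      List.dropLast_append_getLast hne]
  generalize theta D s = θ at *
  generalize (tokenize D s).dropLast = A at *
  have h := hlast
  rw [tokenize_eq] at h
  obtain ⟨p, q, hpq, hp, hq⟩ := foldl_split D _ _ _ h
  obtain ⟨s₁, s₂, rfl, rfl, rfl⟩ := List.map_eq_append_iff.1 hpq
  have h2 : tokenize D s₂ = [θ] := by rw [tokenize_eq]; exact hq
  have h1 : tokenize D s₁ = A := by rw [tokenize_eq]; exact hp
  have h3 : s₂ = θ := by
    rw [← tokenize_flatten D s₂, h2]; simp
  subst h3
  rw [hlast, ← h1]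
  simp [dropSuffix]

end BPE
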